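/- Under the Pólya urn hypotheses, let p ≥ 2 and assume sup_n ‖X_{n+1} − X_n‖_p < ∞. Then for every eigenvalue λ of A there is a constant C (depending on the data and p but not on n) such that for every n ≥ 2: ‖P_λ(X_n − E X_n)‖_p ≤ C n^{1/2} if Re λ < b/2; ‖P_λ(X_n − E X_n)‖_p ≤ C n^{1/2} (log n)^{ν_λ + 1/2} if Re λ = b/2; and ‖P_λ(X_n − E X_n)‖_p ≤ C n^{Re λ / b} (log n)^{ν_λ} if Re λ > b/2. -/

import Mathlib

open MeasureTheory Matrix Filter

/-- `P` is the spectral projection of `A` for the eigenvalue `lam`: it is the identity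
on the generalized eigenspace E_lam = ker((A − lam I)^q) and vanishes on the generalized
eigenspace E_mu = ker((A − mu I)^q) of every other eigenvalue `mu`. Since ℂ^q is the
direct sum of the generalized eigenspaces, these conditions determine `P` uniquely. -/
def IsSpectralProj {q : ℕ} (A : Matrix (Fin q) (Fin q) ℂ) (lam : ℂ)
    (P : Matrix (Fin q) (Fin q) ℂ) : Prop :=
  (∀ v : Fin q → ℂ, ((A - lam • 1) ^ q).mulVec v = 0 → P.mulVec v = v) ∧
  ∀ mu : ℂ, mu ≠ lam → ∀ v : Fin q → ℂ, ((A - mu • 1) ^ q).mulVec v = 0 → P.mulVec v = 0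

/-- `ν` is the nilpotency index ν_lam of N_lam := (A − lam I) P_lam, i.e. the unique
integer ν ≥ 0 with N_lam^(ν+1) = 0 and (ν = 0 or N_lam^ν ≠ 0). -/
def NilIndexOf {q : ℕ} (A : Matrix (Fin q) (Fin q) ℂ) (lam : ℂ)
    (P : Matrix (Fin q) (Fin q) ℂ) (ν : ℕ) : Prop :=
  ((A - lam • 1) * P) ^ (ν + 1) = 0 ∧ (ν = 0 ∨ ((A - lam • 1) * P) ^ ν ≠ 0)

/-!
Writing `N` for the nilpotent part of `A` on the generalized eigenspace, the process `Y n = P (X n)`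
satisfies `E[Y (n + 1) - Y n | F n] = (lam + N) (Y n) / w n`. In a Hilbert space the `L^p` norm is
2-smooth along martingale increments: by a two-point inequality, a conditionally centred increment
adds only a constant times its squared norm to `‖Y n‖_p ^ 2`.

If `N = 0` this is a recursion `v (n + 1) ≤ (1 + 2 Re lam / (b n) + O(n⁻²)) v n + O(1)` for
`v n = ‖Y n‖_p ^ 2`, whence the rates. In general `v n = ∑ i ≤ ν, L ^ (2 i) ‖N ^ i (Y n)‖_p ^ 2`
satisfies the same recursion with `Re lam + 1 / L` in place of `Re lam` and noise `O(L ^ (2 ν))`,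
uniformly in `L ≥ 1`. A fixed large `L` is harmless when `Re lam < b / 2`; otherwise `L` of order
`log n` changes `n ^ (Re lam / b)` by a bounded factor and costs exactly `(log n) ^ ν`. Finally,
centring at the mean at most doubles an `L^p` norm.
-/

/-- The constant `K` in the two-point inequality
`‖x + y‖ ^ p + ‖x - y‖ ^ p ≤ 2 (‖x‖² + K ‖y‖²) ^ (p / 2)`. -/
noncomputable def twoPointConst (p : ℝ) : ℝ := 4 * Real.exp (p / 4) - 3

theorem twoPointConst_nonneg {p : ℝ} (hp : 0 ≤ p) : 0 ≤ twoPointConst p := by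
  have : 1 ≤ Real.exp (p / 4) := Real.one_le_exp (by positivity)
  rw [twoPointConst]
  linarith

theorem exp_mul_le_one_add_mul_exp_sub_one {s : ℝ} (hs₀ : 0 ≤ s) (hs₁ : s ≤ 1) (a : ℝ) :
    Real.exp (s * a) ≤ 1 + s * (Real.exp a - 1) := by
  have := convexOn_exp.2 (Set.mem_univ 0) (Set.mem_univ a) (sub_nonneg.2 hs₁) hs₀ (by ring)
  simp only [smul_eq_mul, mul_zero, zero_add, Real.exp_zero, mul_one] at this
  linarith

theorem one_add_rpow_add_one_sub_rpow_le {r t : ℝ} (hr : 0 ≤ r) (ht : |t| ≤ 1) :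
    (1 + t) ^ r + (1 - t) ^ r ≤ 2 * (1 + (Real.exp (r / 2) - 1) * t ^ 2) ^ r := by
  obtain ⟨ht₀, ht₁⟩ := abs_le.1 ht
  have rpow_le_exp (u : ℝ) (hu : 0 ≤ 1 + u) : (1 + u) ^ r ≤ Real.exp (r * u) := by
    rw [mul_comm, Real.exp_mul]
    exact Real.rpow_le_rpow hu (by linarith [Real.add_one_le_exp u]) hr
  calc (1 + t) ^ r + (1 - t) ^ r
      ≤ Real.exp (r * t) + Real.exp (-(r * t)) := by
        rw [← mul_neg, sub_eq_add_neg]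
        exact add_le_add (rpow_le_exp t (by linarith)) (rpow_le_exp (-t) (by linarith))
    _ = 2 * Real.cosh (r * t) := by rw [Real.cosh_eq]; ring
    _ ≤ 2 * Real.exp ((r * t) ^ 2 / 2) := by gcongr; exact Real.cosh_le_exp_half_sq _
    _ = 2 * Real.exp (t ^ 2 * (r / 2)) ^ r := by rw [← Real.exp_mul]; ring_nf
    _ ≤ 2 * (1 + (Real.exp (r / 2) - 1) * t ^ 2) ^ r := by
        rw [mul_comm _ (t ^ 2)]
        gcongr
        exact exp_mul_le_one_add_mul_exp_sub_one (sq_nonneg t) ((sq_le_one_iff_abs_le_one t).2 ht) _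

theorem rpow_eq_sq_rpow_half {c : ℝ} (hc : 0 ≤ c) (p : ℝ) : c ^ p = (c ^ 2) ^ (p / 2) := by
  rw [← Real.rpow_natCast_mul hc, Nat.cast_ofNat, mul_div_cancel₀ p two_ne_zero]

section TwoPoint

variable {E : Type*} [NormedAddCommGroup E] [InnerProductSpaceable E]

theorem norm_add_sq_add_norm_sub_sq (x y : E) :
    ‖x + y‖ ^ 2 + ‖x - y‖ ^ 2 = 2 * (‖x‖ ^ 2 + ‖y‖ ^ 2) := by
  simpa only [← sq] using InnerProductSpaceable.parallelogram_identity x y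

theorem sq_norm_add_sq_sub_norm_sub_sq_le (x y : E) :
    (‖x + y‖ ^ 2 - ‖x - y‖ ^ 2) ^ 2 ≤ 16 * (‖x‖ ^ 2 + ‖y‖ ^ 2) * ‖y‖ ^ 2 := by
  have hdiff : |‖x + y‖ - ‖x - y‖| ≤ 2 * ‖y‖ := calc
    |‖x + y‖ - ‖x - y‖| ≤ ‖x + y - (x - y)‖ := abs_norm_sub_norm_le _ _
    _ = ‖y + y‖ := by rw [add_sub_sub_cancel]
    _ ≤ 2 * ‖y‖ := by rw [two_mul]; exact norm_add_le y y
  have hsum : (‖x + y‖ + ‖x - y‖) ^ 2 ≤ 4 * (‖x‖ ^ 2 + ‖y‖ ^ 2) := by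
    linarith [norm_add_sq_add_norm_sub_sq x y, sq_nonneg (‖x + y‖ - ‖x - y‖)]
  calc (‖x + y‖ ^ 2 - ‖x - y‖ ^ 2) ^ 2
      = (‖x + y‖ + ‖x - y‖) ^ 2 * |‖x + y‖ - ‖x - y‖| ^ 2 := by rw [sq_abs]; ring
    _ ≤ 4 * (‖x‖ ^ 2 + ‖y‖ ^ 2) * (2 * ‖y‖) ^ 2 := by gcongr
    _ = 16 * (‖x‖ ^ 2 + ‖y‖ ^ 2) * ‖y‖ ^ 2 := by ring

theorem norm_add_rpow_add_norm_sub_rpow_le {p : ℝ} (hp : 0 < p) (x y : E) :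
    ‖x + y‖ ^ p + ‖x - y‖ ^ p ≤ 2 * (‖x‖ ^ 2 + twoPointConst p * ‖y‖ ^ 2) ^ (p / 2) := by
  set u := ‖x‖ ^ 2 + ‖y‖ ^ 2 with hu
  have parallelogram : ‖x + y‖ ^ 2 + ‖x - y‖ ^ 2 = 2 * u := norm_add_sq_add_norm_sub_sq x y
  rcases (by positivity : 0 ≤ u).eq_or_lt with h₀ | h₀
  · have hx : x = 0 := by simpa using (by linarith [sq_nonneg ‖x‖, sq_nonneg ‖y‖] : ‖x‖ ^ 2 = 0)
    have hy : y = 0 := by simpa using (by linarith [sq_nonneg ‖x‖, sq_nonneg ‖y‖] : ‖y‖ ^ 2 = 0)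
    simp [hx, hy, hp.ne']
  set t := (‖x + y‖ ^ 2 - ‖x - y‖ ^ 2) / (2 * u) with ht
  have hadd : ‖x + y‖ ^ 2 = u * (1 + t) := by rw [ht]; field_simp; linarith
  have hsub : ‖x - y‖ ^ 2 = u * (1 - t) := by rw [ht]; field_simp; linarith
  have ht₁ : 0 ≤ 1 + t := nonneg_of_mul_nonneg_right (hadd ▸ sq_nonneg _) h₀
  have ht₂ : 0 ≤ 1 - t := nonneg_of_mul_nonneg_right (hsub ▸ sq_nonneg _) h₀
  have hut : u * t ^ 2 ≤ 4 * ‖y‖ ^ 2 := by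
    have := sq_norm_add_sq_sub_norm_sub_sq_le x y
    rw [hadd, hsub, ← hu] at this
    exact le_of_mul_le_mul_left (by linarith) h₀
  have hK : 0 ≤ Real.exp (p / 4) - 1 := sub_nonneg.2 (Real.one_le_exp (by positivity))
  calc ‖x + y‖ ^ p + ‖x - y‖ ^ p
      = u ^ (p / 2) * ((1 + t) ^ (p / 2) + (1 - t) ^ (p / 2)) := by
        rw [rpow_eq_sq_rpow_half (norm_nonneg _), rpow_eq_sq_rpow_half (norm_nonneg (x - y)), hadd,
          hsub, Real.mul_rpow h₀.le ht₁, Real.mul_rpow h₀.le ht₂, mul_add]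
    _ ≤ u ^ (p / 2) * (2 * (1 + (Real.exp (p / 2 / 2) - 1) * t ^ 2) ^ (p / 2)) := by
        gcongr
        exact one_add_rpow_add_one_sub_rpow_le (by positivity) (abs_le.2 ⟨by linarith, by linarith⟩)
    _ = 2 * (u + (Real.exp (p / 4) - 1) * (u * t ^ 2)) ^ (p / 2) := by
        rw [div_div, show (2 * 2 : ℝ) = 4 by norm_num, mul_left_comm,
          ← Real.mul_rpow h₀.le (by positivity)]
        ring_nf
    _ ≤ 2 * (u + (Real.exp (p / 4) - 1) * (4 * ‖y‖ ^ 2)) ^ (p / 2) := by gcongr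
    _ = 2 * (‖x‖ ^ 2 + twoPointConst p * ‖y‖ ^ 2) ^ (p / 2) := by rw [hu, twoPointConst]; ring_nf

end TwoPoint

section MartingaleIncrement

theorem two_mul_add_rpow_sub_rpow_le {r u c : ℝ} (hr : 1 ≤ r) (hu : 0 ≤ u) (hc : 0 ≤ c) :
    2 * (u + c) ^ r - u ^ r ≤ (u + 2 * c) ^ r := by
  have := (convexOn_rpow hr).2 hu (add_nonneg hu (mul_nonneg zero_le_two hc))
    (by norm_num : (0 : ℝ) ≤ 1 / 2) (by norm_num : (0 : ℝ) ≤ 1 / 2) (by norm_num)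
  simp only [smul_eq_mul] at this
  rw [show 1 / 2 * u + 1 / 2 * (u + 2 * c) = u + c by ring] at this
  linarith

variable {Ω E : Type*} {m0 : MeasurableSpace Ω} {μ : Measure Ω} [NormedAddCommGroup E] {p : ℝ}

theorem lpNorm_ofReal_rpow (hp : 0 < p) {f : Ω → E} (hf : MemLp f (ENNReal.ofReal p) μ) :
    lpNorm f (ENNReal.ofReal p) μ ^ p = ∫ ω, ‖f ω‖ ^ p ∂μ := by
  rw [lpNorm_eq_integral_norm_rpow_toReal (by simpa using hp) ENNReal.ofReal_ne_top hf.1,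
    ENNReal.toReal_ofReal hp.le, ← Real.rpow_mul (by positivity), inv_mul_cancel₀ hp.ne',
    Real.rpow_one]

theorem integrable_norm_rpow_ofReal (hp : 0 < p) {f : Ω → E}
    (hf : MemLp f (ENNReal.ofReal p) μ) : Integrable (fun ω ↦ ‖f ω‖ ^ p) μ := by
  simpa only [ENNReal.toReal_ofReal hp.le] using
    hf.integrable_norm_rpow (by simpa using hp) ENNReal.ofReal_ne_top

theorem lpNorm_le_mul_lpNorm_of_ae_norm_le {F : Type*} [NormedAddCommGroup F] {p : ENNReal}
    {f : Ω → E} {g : Ω → F} {c : ℝ} (hc : 0 ≤ c) (hg : MemLp g p μ)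
    (h : ∀ᵐ ω ∂μ, ‖f ω‖ ≤ c * ‖g ω‖) : lpNorm f p μ ≤ c * lpNorm g p μ := by
  by_cases hf : AEStronglyMeasurable f μ
  · rw [← toReal_eLpNorm hf, ← toReal_eLpNorm hg.1, ← ENNReal.toReal_ofReal_mul c _ hc]
    exact ENNReal.toReal_mono (ENNReal.mul_ne_top ENNReal.ofReal_ne_top hg.eLpNorm_ne_top)
      (eLpNorm_le_mul_eLpNorm_of_ae_le_mul h p)
  · rw [lpNorm_of_not_aestronglyMeasurable hf]
    exact mul_nonneg hc lpNorm_nonneg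

theorem lpNorm_clm_comp_le {𝕜 F : Type*} [NontriviallyNormedField 𝕜] [NormedSpace 𝕜 E]
    [NormedAddCommGroup F] [NormedSpace 𝕜 F] (T : E →L[𝕜] F) {p : ENNReal} {f : Ω → E}
    (hf : MemLp f p μ) : lpNorm (fun ω ↦ T (f ω)) p μ ≤ ‖T‖ * lpNorm f p μ :=
  lpNorm_le_mul_lpNorm_of_ae_norm_le (norm_nonneg T) hf (ae_of_all _ fun ω ↦ T.le_opNorm (f ω))

theorem memLp_norm_sq {f : Ω → E} (hf : MemLp f (ENNReal.ofReal p) μ) :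
    MemLp (fun ω ↦ ‖f ω‖ ^ 2) (ENNReal.ofReal (p / 2)) μ := by
  simpa [ENNReal.ofReal_div_of_pos] using hf.norm_rpow_div 2

theorem lpNorm_norm_sq (hp : 0 < p) {f : Ω → E} (hf : MemLp f (ENNReal.ofReal p) μ) :
    lpNorm (fun ω ↦ ‖f ω‖ ^ 2) (ENNReal.ofReal (p / 2)) μ =
      lpNorm f (ENNReal.ofReal p) μ ^ 2 := by
  have := lpNorm_ofReal_rpow (half_pos hp) (memLp_norm_sq hf)
  refine (Real.rpow_left_inj lpNorm_nonneg (by positivity) (half_pos hp).ne').1 (this.trans ?_)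
  rw [← rpow_eq_sq_rpow_half lpNorm_nonneg, lpNorm_ofReal_rpow hp hf]
  simp only [norm_pow, norm_norm, rpow_eq_sq_rpow_half (norm_nonneg _) p]

theorem integral_norm_sq_add_mul_rpow_le (hp : 2 ≤ p) {K : ℝ} (hK : 0 ≤ K) {f g : Ω → E}
    (hf : MemLp f (ENNReal.ofReal p) μ) (hg : MemLp g (ENNReal.ofReal p) μ) :
    Integrable (fun ω ↦ (‖f ω‖ ^ 2 + K * ‖g ω‖ ^ 2) ^ (p / 2)) μ ∧
    ∫ ω, (‖f ω‖ ^ 2 + K * ‖g ω‖ ^ 2) ^ (p / 2) ∂μ ≤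
      (lpNorm f (ENNReal.ofReal p) μ ^ 2 + K * lpNorm g (ENNReal.ofReal p) μ ^ 2) ^ (p / 2) := by
  have hp₀ : 0 < p := by linarith
  have hf' := memLp_norm_sq hf
  have hg' := (memLp_norm_sq hg).const_smul K
  have nonneg (ω : Ω) : 0 ≤ ‖f ω‖ ^ 2 + K * ‖g ω‖ ^ 2 := by positivity
  have eq_norm (ω : Ω) : ‖((fun ω ↦ ‖f ω‖ ^ 2) + K • fun ω ↦ ‖g ω‖ ^ 2) ω‖ ^ (p / 2) =
      (‖f ω‖ ^ 2 + K * ‖g ω‖ ^ 2) ^ (p / 2) :=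
    congrArg (· ^ (p / 2)) (Real.norm_of_nonneg (nonneg ω))
  simp only [← eq_norm]
  refine ⟨integrable_norm_rpow_ofReal (half_pos hp₀) (hf'.add hg'), ?_⟩
  rw [← lpNorm_ofReal_rpow (half_pos hp₀) (hf'.add hg')]
  refine Real.rpow_le_rpow lpNorm_nonneg ?_ (half_pos hp₀).le
  refine (lpNorm_add_le hf' (ENNReal.one_le_ofReal.2 (by linarith))).trans_eq ?_
  rw [lpNorm_const_smul, lpNorm_norm_sq hp₀ hf, lpNorm_norm_sq hp₀ hg, coe_nnnorm,
    Real.norm_of_nonneg hK]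

variable [NormedSpace ℝ E] [CompleteSpace E] {m : MeasurableSpace Ω}

theorem lpNorm_sub_condExp_le {p : ENNReal} (hp : 1 ≤ p) {f : Ω → E} (hf : MemLp f p μ) :
    lpNorm (f - μ[f | m]) p μ ≤ 2 * lpNorm f p μ := by
  linarith [lpNorm_sub_le (g := μ[f | m]) hf hp, hf.lpNorm_condExp_le_lpNorm (m := m) hp]

theorem condExp_clm_comp_sub {F : Type*} [NormedAddCommGroup F] [NormedSpace ℝ F] [CompleteSpace F]
    {T : E → E} {T' : F → F} {R : E →L[ℝ] F} (hR : ∀ x, R (T x) = T' (R x)) {f g : Ω → E} {β : ℝ}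
    (hd : Integrable (g - f) μ) (hdrift : μ[g - f | m] =ᵐ[μ] fun ω ↦ β • T (f ω)) :
    μ[(fun ω ↦ R (g ω)) - (fun ω ↦ R (f ω)) | m] =ᵐ[μ] fun ω ↦ β • T' (R (f ω)) := by
  have hcomp : (fun ω ↦ R (g ω)) - (fun ω ↦ R (f ω)) = R ∘ (g - f) := by
    ext ω
    simp
  rw [hcomp]
  filter_upwards [R.comp_condExp_comm (m := m) hd, hdrift] with ω h₁ h₂
  rw [← h₁, Function.comp_apply, h₂, map_smul, hR]

theorem eLpNorm_clm_comp_sub_integral_le {F : Type*} [NormedAddCommGroup F] [NormedSpace ℝ F]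
    [CompleteSpace F] [IsProbabilityMeasure μ] {p : ENNReal} (hp : 1 ≤ p) {f : Ω → E}
    (hf : MemLp f p μ) (R : E →L[ℝ] F) :
    eLpNorm (fun ω ↦ R (f ω - ∫ ω', f ω' ∂μ)) p μ ≤
      ENNReal.ofReal (2 * lpNorm (fun ω ↦ R (f ω)) p μ) := by
  have hRf : MemLp (fun ω ↦ R (f ω)) p μ := R.comp_memLp' hf
  have hcenter : (fun ω ↦ R (f ω - ∫ ω', f ω' ∂μ)) =
      (fun ω ↦ R (f ω)) - μ[fun ω ↦ R (f ω) | ⊥] := by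
    rw [condExp_bot, R.integral_comp_comm (hf.integrable hp)]
    ext ω
    simp
  rw [hcenter, ← ofReal_lpNorm (hRf.sub (hRf.condExp hp))]
  exact ENNReal.ofReal_le_ofReal (lpNorm_sub_condExp_le hp hRf)

variable [IsFiniteMeasure μ]

theorem lpNorm_le_lpNorm_sub_of_condExp_eq_zero (hm : m ≤ m0) (hp : 1 ≤ p) {f g : Ω → E}
    (hfm : StronglyMeasurable[m] f) (hf : MemLp f (ENNReal.ofReal p) μ)
    (hg : MemLp g (ENNReal.ofReal p) μ) (hg₀ : μ[g | m] =ᵐ[μ] 0) :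
    lpNorm f (ENNReal.ofReal p) μ ≤ lpNorm (f - g) (ENNReal.ofReal p) μ := by
  have hp' : 1 ≤ ENNReal.ofReal p := ENNReal.one_le_ofReal.2 hp
  have : μ[f - g | m] =ᵐ[μ] f := by
    filter_upwards [condExp_sub (hf.integrable hp') (hg.integrable hp') m, hg₀] with ω h₁ h₂
    rw [h₁, Pi.sub_apply, h₂, condExp_of_stronglyMeasurable hm hfm (hf.integrable hp'),
      Pi.zero_apply, sub_zero]
  calc lpNorm f (ENNReal.ofReal p) μ
      ≤ 1 * lpNorm (μ[f - g | m]) (ENNReal.ofReal p) μ :=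
        lpNorm_le_mul_lpNorm_of_ae_norm_le zero_le_one ((hf.sub hg).condExp hp') <| by
          filter_upwards [this] with ω hω
          rw [hω, one_mul]
    _ ≤ lpNorm (f - g) (ENNReal.ofReal p) μ := by
        rw [one_mul]
        exact (hf.sub hg).lpNorm_condExp_le_lpNorm hp'

variable [InnerProductSpaceable E]

theorem lpNorm_add_sq_le_of_condExp_eq_zero (hm : m ≤ m0) (hp : 2 ≤ p)
    {f g : Ω → E} (hfm : StronglyMeasurable[m] f) (hf : MemLp f (ENNReal.ofReal p) μ)
    (hg : MemLp g (ENNReal.ofReal p) μ) (hg₀ : μ[g | m] =ᵐ[μ] 0) :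
    lpNorm (f + g) (ENNReal.ofReal p) μ ^ 2 ≤ lpNorm f (ENNReal.ofReal p) μ ^ 2 +
      2 * twoPointConst p * lpNorm g (ENNReal.ofReal p) μ ^ 2 := by
  have hp₀ : 0 < p := by linarith
  have hK := twoPointConst_nonneg hp₀.le
  set M := lpNorm f (ENNReal.ofReal p) μ
  set D := lpNorm g (ENNReal.ofReal p) μ
  obtain ⟨hint, hmink⟩ := integral_norm_sq_add_mul_rpow_le hp hK hf hg
  have two_point : lpNorm (f + g) (ENNReal.ofReal p) μ ^ p + lpNorm (f - g) (ENNReal.ofReal p) μ ^ p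
      ≤ 2 * (M ^ 2 + twoPointConst p * D ^ 2) ^ (p / 2) := by
    have hadd := integrable_norm_rpow_ofReal hp₀ (hf.add hg)
    have hsub := integrable_norm_rpow_ofReal hp₀ (hf.sub hg)
    rw [lpNorm_ofReal_rpow hp₀ (hf.add hg), lpNorm_ofReal_rpow hp₀ (hf.sub hg),
      ← integral_add hadd hsub]
    refine (integral_mono (hadd.add hsub) (hint.const_mul 2) fun ω ↦
      norm_add_rpow_add_norm_sub_rpow_le hp₀ (f ω) (g ω)).trans ?_
    rw [integral_const_mul]
    gcongr
  have contraction : M ^ p ≤ lpNorm (f - g) (ENNReal.ofReal p) μ ^ p :=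
    Real.rpow_le_rpow lpNorm_nonneg
      (lpNorm_le_lpNorm_sub_of_condExp_eq_zero hm (by linarith) hfm hf hg hg₀) hp₀.le
  rw [← Real.rpow_le_rpow_iff (sq_nonneg _) (by positivity) (half_pos hp₀)]
  calc (lpNorm (f + g) (ENNReal.ofReal p) μ ^ 2) ^ (p / 2)
      ≤ 2 * (M ^ 2 + twoPointConst p * D ^ 2) ^ (p / 2) - (M ^ 2) ^ (p / 2) := by
        rw [← rpow_eq_sq_rpow_half lpNorm_nonneg, ← rpow_eq_sq_rpow_half lpNorm_nonneg]
        linarith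
    _ ≤ (M ^ 2 + 2 * (twoPointConst p * D ^ 2)) ^ (p / 2) :=
        two_mul_add_rpow_sub_rpow_le (by linarith) (sq_nonneg _) (by positivity)
    _ = (M ^ 2 + 2 * twoPointConst p * D ^ 2) ^ (p / 2) := by rw [mul_assoc]

theorem lpNorm_sq_le_lpNorm_add_condExp_sub_sq (hm : m ≤ m0) (hp : 2 ≤ p) {f g : Ω → E}
    (hfm : StronglyMeasurable[m] f)
    (hf : MemLp f (ENNReal.ofReal p) μ) (hg : MemLp g (ENNReal.ofReal p) μ) :
    lpNorm g (ENNReal.ofReal p) μ ^ 2 ≤ lpNorm (f + μ[g - f | m]) (ENNReal.ofReal p) μ ^ 2 +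
      8 * twoPointConst p * lpNorm (g - f) (ENNReal.ofReal p) μ ^ 2 := by
  have hp' : 1 ≤ ENNReal.ofReal p := ENNReal.one_le_ofReal.2 (by linarith)
  have hd : MemLp (g - f) (ENNReal.ofReal p) μ := hg.sub hf
  have hdm : MemLp μ[g - f | m] (ENNReal.ofReal p) μ := hd.condExp hp'
  have hmart : μ[(g - f) - μ[g - f | m] | m] =ᵐ[μ] 0 := by
    filter_upwards [condExp_sub (hd.integrable hp') integrable_condExp m] with ω hω
    rw [hω, condExp_of_stronglyMeasurable hm stronglyMeasurable_condExp integrable_condExp,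
      sub_self]
  calc lpNorm g (ENNReal.ofReal p) μ ^ 2
      = lpNorm (f + μ[g - f | m] + ((g - f) - μ[g - f | m])) (ENNReal.ofReal p) μ ^ 2 := by
        congr 2
        abel
    _ ≤ lpNorm (f + μ[g - f | m]) (ENNReal.ofReal p) μ ^ 2 +
          2 * twoPointConst p * lpNorm ((g - f) - μ[g - f | m]) (ENNReal.ofReal p) μ ^ 2 :=
        lpNorm_add_sq_le_of_condExp_eq_zero hm hp (hfm.add stronglyMeasurable_condExp)
          (hf.add hdm) (hd.sub hdm) hmart
    _ ≤ lpNorm (f + μ[g - f | m]) (ENNReal.ofReal p) μ ^ 2 +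
          2 * twoPointConst p * (2 * lpNorm (g - f) (ENNReal.ofReal p) μ) ^ 2 := by
        have hK := twoPointConst_nonneg (p := p) (by linarith)
        have := lpNorm_nonneg (f := (g - f) - μ[g - f | m]) (p := ENNReal.ofReal p) (μ := μ)
        have := lpNorm_sub_condExp_le (m := m) hp' hd
        gcongr
    _ = _ := by ring

end MartingaleIncrement

section NilpotentPerturbation

theorem sum_pow_mul_add_sq_le {α β L : ℝ} (hα : 0 ≤ α) (hβ : 0 ≤ β) (hL : 0 < L) {ν : ℕ}
    {y : ℕ → ℝ} (hy : y (ν + 1) = 0) :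
    ∑ i ∈ Finset.range (ν + 1), (L ^ i) ^ 2 * (α * y i + β * y (i + 1)) ^ 2 ≤
      (α + β / L) ^ 2 * ∑ i ∈ Finset.range (ν + 1), (L ^ i) ^ 2 * y i ^ 2 := by
  set S := ∑ i ∈ Finset.range (ν + 1), (L ^ i) ^ 2 * y i ^ 2 with hS
  have shift : ∑ i ∈ Finset.range (ν + 1), (L ^ (i + 1)) ^ 2 * y (i + 1) ^ 2 ≤ S := by
    have := Finset.sum_range_succ' (fun i ↦ (L ^ i) ^ 2 * y i ^ 2) (ν + 1)
    rw [Finset.sum_range_succ, hy] at this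
    simp only [ne_eq, OfNat.ofNat_ne_zero, not_false_eq_true, zero_pow, mul_zero, add_zero] at this
    rw [hS, this]
    exact le_add_of_nonneg_right (by positivity)
  have weighted_cauchy (u v : ℝ) :
      (α * u + β / L * v) ^ 2 ≤ (α + β / L) * (α * u ^ 2 + β / L * v ^ 2) := by
    have : 0 ≤ α * (β / L) * (u - v) ^ 2 := by positivity
    linarith
  calc ∑ i ∈ Finset.range (ν + 1), (L ^ i) ^ 2 * (α * y i + β * y (i + 1)) ^ 2
      ≤ ∑ i ∈ Finset.range (ν + 1), (α + β / L) *
          (α * ((L ^ i) ^ 2 * y i ^ 2) + β / L * ((L ^ (i + 1)) ^ 2 * y (i + 1) ^ 2)) := by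
        refine Finset.sum_le_sum fun i _ ↦ ?_
        have := weighted_cauchy (L ^ i * y i) (L ^ (i + 1) * y (i + 1))
        calc (L ^ i) ^ 2 * (α * y i + β * y (i + 1)) ^ 2
            = (α * (L ^ i * y i) + β / L * (L ^ (i + 1) * y (i + 1))) ^ 2 := by field_simp; ring
          _ ≤ _ := this
          _ = _ := by ring
    _ = (α + β / L) * (α * S + β / L *
          ∑ i ∈ Finset.range (ν + 1), (L ^ (i + 1)) ^ 2 * y (i + 1) ^ 2) := by
        rw [← Finset.mul_sum, Finset.sum_add_distrib, ← Finset.mul_sum, ← Finset.mul_sum]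
    _ ≤ (α + β / L) * (α * S + β / L * S) := by gcongr
    _ = (α + β / L) ^ 2 * S := by ring

theorem norm_one_add_le (z : ℂ) : ‖1 + z‖ ≤ 1 + z.re + ‖z‖ ^ 2 / 2 := by
  have hsq : ‖1 + z‖ ^ 2 = 1 + 2 * z.re + ‖z‖ ^ 2 := by
    rw [Complex.sq_norm, Complex.sq_norm, Complex.normSq_add]
    simp only [Complex.normSq_one, one_mul, Complex.conj_re]
    ring
  linarith [sq_nonneg (‖1 + z‖ - 1)]

theorem sq_norm_one_add_add_le_exp {β σ : ℝ} (hβ : 0 ≤ β) (hσ : 0 ≤ σ) (lam : ℂ) :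
    (‖1 + β * lam‖ + β * σ) ^ 2 ≤ Real.exp (2 * (lam.re + σ) * β + ‖lam‖ ^ 2 * β ^ 2) := by
  have h := norm_one_add_le (β * lam)
  rw [Complex.re_ofReal_mul, norm_mul, Complex.norm_of_nonneg hβ] at h
  have hexp := Real.add_one_le_exp ((lam.re + σ) * β + ‖lam‖ ^ 2 * β ^ 2 / 2)
  calc (‖1 + β * lam‖ + β * σ) ^ 2
      ≤ Real.exp ((lam.re + σ) * β + ‖lam‖ ^ 2 * β ^ 2 / 2) ^ 2 := by
        gcongr
        linarith
    _ = _ := by rw [← Real.exp_nat_mul]; ring_nf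

variable {Ω E : Type*} {m m0 : MeasurableSpace Ω} {μ : Measure Ω} [NormedAddCommGroup E]
  [NormedSpace ℂ E] {p : ℝ}

/-- The squared `L^p` norms along the chain `f, N f, …, N ^ ν f`, with weights `L ^ (2 i)`. As `L`
grows, the contribution of `N` to the growth of this energy under `lam + N` becomes negligible. -/
noncomputable def chainEnergy (N : E →L[ℂ] E) (ν : ℕ) (L : ℝ) (f : Ω → E) (p : ENNReal)
    (μ : Measure Ω) : ℝ :=
  ∑ i ∈ Finset.range (ν + 1), (L ^ i) ^ 2 * lpNorm (fun ω ↦ (N ^ i) (f ω)) p μ ^ 2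

theorem lpNorm_sq_le_chainEnergy (N : E →L[ℂ] E) (ν : ℕ) (L : ℝ) (f : Ω → E) (p : ENNReal) :
    lpNorm f p μ ^ 2 ≤ chainEnergy N ν L f p μ := by
  rw [chainEnergy, Finset.sum_range_succ']
  simpa using Finset.sum_nonneg fun i _ ↦ by positivity

theorem chainEnergy_nonneg (N : E →L[ℂ] E) (ν : ℕ) (L : ℝ) (f : Ω → E) (p : ENNReal) :
    0 ≤ chainEnergy N ν L f p μ :=
  (sq_nonneg _).trans (lpNorm_sq_le_chainEnergy N ν L f p)

theorem chainEnergy_le {N : E →L[ℂ] E} {ν : ℕ} {L : ℝ} (hL : 1 ≤ L) {f : Ω → E} {p : ENNReal}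
    (hf : MemLp f p μ) {B : ℝ} (hB : lpNorm f p μ ≤ B) :
    chainEnergy N ν L f p μ ≤ (L ^ ν) ^ 2 * (∑ i ∈ Finset.range (ν + 1), ‖N ^ i‖ ^ 2) * B ^ 2 := by
  rw [chainEnergy, Finset.mul_sum, Finset.sum_mul]
  refine Finset.sum_le_sum fun i hi ↦ ?_
  have hi : i ≤ ν := Nat.lt_succ_iff.1 (Finset.mem_range.1 hi)
  calc (L ^ i) ^ 2 * lpNorm (fun ω ↦ (N ^ i) (f ω)) p μ ^ 2
      ≤ (L ^ ν) ^ 2 * (‖N ^ i‖ * B) ^ 2 := by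
        have := (lpNorm_clm_comp_le (N ^ i) hf).trans
          (mul_le_mul_of_nonneg_left hB (norm_nonneg _))
        have := lpNorm_nonneg (f := fun ω ↦ (N ^ i) (f ω)) (p := p) (μ := μ)
        gcongr
    _ = (L ^ ν) ^ 2 * ‖N ^ i‖ ^ 2 * B ^ 2 := by ring

theorem lpNorm_add_condExp_sub_le (hp : 1 ≤ p) {f g : Ω → E} {lam : ℂ} {β : ℝ} (hβ : 0 ≤ β)
    {N : E →L[ℂ] E} (hf : MemLp f (ENNReal.ofReal p) μ)
    (hdrift : μ[g - f | m] =ᵐ[μ] fun ω ↦ β • (lam • f ω + N (f ω))) :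
    lpNorm (f + μ[g - f | m]) (ENNReal.ofReal p) μ ≤
      ‖1 + β * lam‖ * lpNorm f (ENNReal.ofReal p) μ +
        β * lpNorm (fun ω ↦ N (f ω)) (ENNReal.ofReal p) μ := by
  have hNf := N.comp_memLp' hf
  calc lpNorm (f + μ[g - f | m]) (ENNReal.ofReal p) μ
      ≤ 1 * lpNorm ((1 + β * lam) • f + β • fun ω ↦ N (f ω)) (ENNReal.ofReal p) μ := by
        refine lpNorm_le_mul_lpNorm_of_ae_norm_le zero_le_one
          ((hf.const_smul _).add (hNf.const_smul _)) ?_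
        filter_upwards [hdrift] with ω hω
        rw [one_mul, Pi.add_apply, hω, Pi.add_apply, Pi.smul_apply, Pi.smul_apply, add_smul,
          one_smul, mul_smul, smul_add, add_assoc, Complex.coe_smul]
    _ ≤ lpNorm ((1 + β * lam) • f) (ENNReal.ofReal p) μ +
          lpNorm (β • fun ω ↦ N (f ω)) (ENNReal.ofReal p) μ := by
        rw [one_mul]
        exact lpNorm_add_le (hf.const_smul _) (ENNReal.one_le_ofReal.2 hp)
    _ = _ := by
        rw [lpNorm_const_smul, lpNorm_const_smul, coe_nnnorm, coe_nnnorm, Real.norm_of_nonneg hβ]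

variable [CompleteSpace E] [InnerProductSpaceable E] [IsFiniteMeasure μ]

theorem lpNorm_clm_comp_sq_le (hm : m ≤ m0) (hp : 2 ≤ p) {f g : Ω → E} {lam : ℂ}
    {β : ℝ} (hβ : 0 ≤ β) {N T : E →L[ℂ] E} (hTN : Commute T N) (hfm : StronglyMeasurable[m] f)
    (hf : MemLp f (ENNReal.ofReal p) μ) (hg : MemLp g (ENNReal.ofReal p) μ)
    (hdrift : μ[g - f | m] =ᵐ[μ] fun ω ↦ β • (lam • f ω + N (f ω))) :
    lpNorm (fun ω ↦ T (g ω)) (ENNReal.ofReal p) μ ^ 2 ≤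
      (‖1 + β * lam‖ * lpNorm (fun ω ↦ T (f ω)) (ENNReal.ofReal p) μ +
        β * lpNorm (fun ω ↦ N (T (f ω))) (ENNReal.ofReal p) μ) ^ 2 +
      8 * twoPointConst p * lpNorm (fun ω ↦ T ((g - f) ω)) (ENNReal.ofReal p) μ ^ 2 := by
  have hp' : 1 ≤ p := by linarith
  have hd : Integrable (g - f) μ := (hg.sub hf).integrable (ENNReal.one_le_ofReal.2 hp')
  have hTf := T.comp_memLp' hf
  have intertwine (x : E) : T (lam • x + N x) = lam • T x + N (T x) := by
    rw [map_add, map_smul]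
    exact congrArg _ (DFunLike.congr_fun hTN.eq x)
  have hTdrift : μ[(fun ω ↦ T (g ω)) - (fun ω ↦ T (f ω)) | m] =ᵐ[μ]
      fun ω ↦ β • (lam • T (f ω) + N (T (f ω))) :=
    condExp_clm_comp_sub (T := fun x ↦ lam • x + N x) (T' := fun x ↦ lam • x + N x)
      (R := T.restrictScalars ℝ) intertwine hd hdrift
  have drift := lpNorm_add_condExp_sub_le hp' hβ hTf hTdrift
  have noise := lpNorm_sq_le_lpNorm_add_condExp_sub_sq hm hp
    (T.continuous.comp_stronglyMeasurable hfm) hTf (T.comp_memLp' hg)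
  have hsub : (fun ω ↦ T ((g - f) ω)) = (fun ω ↦ T (g ω)) - fun ω ↦ T (f ω) := by
    ext ω
    simp
  rw [hsub]
  exact noise.trans (add_le_add_left (pow_le_pow_left₀ lpNorm_nonneg drift 2) _)

theorem chainEnergy_le_mul_chainEnergy_add (hm : m ≤ m0) (hp : 2 ≤ p) {f g : Ω → E} {lam : ℂ}
    {β : ℝ} (hβ : 0 ≤ β) {N : E →L[ℂ] E} {ν : ℕ} (hN : N ^ (ν + 1) = 0) {L : ℝ} (hL : 0 < L)
    (hfm : StronglyMeasurable[m] f)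
    (hf : MemLp f (ENNReal.ofReal p) μ) (hg : MemLp g (ENNReal.ofReal p) μ)
    (hdrift : μ[g - f | m] =ᵐ[μ] fun ω ↦ β • (lam • f ω + N (f ω))) :
    chainEnergy N ν L g (ENNReal.ofReal p) μ ≤
      Real.exp (2 * (lam.re + L⁻¹) * β + ‖lam‖ ^ 2 * β ^ 2) *
          chainEnergy N ν L f (ENNReal.ofReal p) μ +
        8 * twoPointConst p * chainEnergy N ν L (g - f) (ENNReal.ofReal p) μ := by
  set y : ℕ → ℝ := fun i ↦ lpNorm (fun ω ↦ (N ^ i) (f ω)) (ENNReal.ofReal p) μ with hy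
  have step (i : ℕ) := lpNorm_clm_comp_sq_le hm hp hβ ((Commute.refl N).pow_left i) hfm hf hg hdrift
  simp only [← mul_apply_eq_comp, ← pow_succ'] at step
  have hy₀ : y (ν + 1) = 0 := by simp only [hy, hN, _root_.zero_apply, lpNorm_fun_zero]
  calc chainEnergy N ν L g (ENNReal.ofReal p) μ
      ≤ ∑ i ∈ Finset.range (ν + 1), (L ^ i) ^ 2 * ((‖1 + β * lam‖ * y i + β * y (i + 1)) ^ 2 +
          8 * twoPointConst p *
            lpNorm (fun ω ↦ (N ^ i) ((g - f) ω)) (ENNReal.ofReal p) μ ^ 2) :=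
        Finset.sum_le_sum fun i _ ↦ mul_le_mul_of_nonneg_left (step i) (sq_nonneg _)
    _ = ∑ i ∈ Finset.range (ν + 1), (L ^ i) ^ 2 * (‖1 + β * lam‖ * y i + β * y (i + 1)) ^ 2 +
          8 * twoPointConst p * chainEnergy N ν L (g - f) (ENNReal.ofReal p) μ := by
        rw [chainEnergy, Finset.mul_sum, ← Finset.sum_add_distrib]
        exact Finset.sum_congr rfl fun i _ ↦ by ring
    _ ≤ _ := by
        refine add_le_add_left ?_ _
        refine (sum_pow_mul_add_sq_le (norm_nonneg _) hβ hL hy₀).trans ?_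
        rw [div_eq_mul_inv]
        exact mul_le_mul_of_nonneg_right
          (sq_norm_one_add_add_le_exp hβ (inv_nonneg.2 hL.le) lam) (by positivity)

end NilpotentPerturbation

section Recursion

/-- The sum `∑_{k < m} (m / (k + 1)) ^ s`, which compares the rate `m ^ s` with the increments
accumulated and then amplified between times `k` and `m`. -/
noncomputable def ratioSum (s : ℝ) (m : ℕ) : ℝ :=
  ∑ k ∈ Finset.range m, ((m : ℝ) / (k + 1)) ^ s

theorem ratioSum_nonneg (s : ℝ) (m : ℕ) : 0 ≤ ratioSum s m :=
  Finset.sum_nonneg fun k _ ↦ by positivity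

/-- A sequence of order `t ^ σ` whose growth from `t` to `t + 1` dominates
`exp (σ / t + c / t ^ 2)`. -/
noncomputable def growthWeight (σ c t : ℝ) : ℝ := t ^ σ * Real.exp (-((|σ| + 2 * c) / t))

theorem growthWeight_pos (σ c : ℝ) {t : ℝ} (ht : 0 < t) : 0 < growthWeight σ c t := by
  rw [growthWeight]
  positivity

theorem inv_add_one_le_log_sub_log {t : ℝ} (ht : 0 < t) :
    (t + 1)⁻¹ ≤ Real.log (t + 1) - Real.log t := by
  have h := Real.one_sub_inv_le_log_of_pos (div_pos (by linarith : 0 < t + 1) ht)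
  rw [Real.log_div (by positivity) ht.ne'] at h
  convert h using 1
  field_simp
  ring

theorem log_sub_log_le_inv {t : ℝ} (ht : 0 < t) : Real.log (t + 1) - Real.log t ≤ t⁻¹ := by
  have h := Real.log_le_sub_one_of_pos (div_pos (by linarith : 0 < t + 1) ht)
  rw [Real.log_div (by positivity) ht.ne'] at h
  convert h using 1
  field_simp
  ring

theorem exp_mul_growthWeight_le {σ c t : ℝ} (hc : 0 ≤ c) (ht : 1 ≤ t) :
    Real.exp (σ / t + c / t ^ 2) * growthWeight σ c t ≤ growthWeight σ c (t + 1) := by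
  have ht₀ : 0 < t := by linarith
  have gap : t⁻¹ - (t + 1)⁻¹ = (t * (t + 1))⁻¹ := by field_simp; ring
  have hlog : σ * (t⁻¹ - (Real.log (t + 1) - Real.log t)) ≤ |σ| * (t⁻¹ - (t + 1)⁻¹) := by
    have h₁ := inv_add_one_le_log_sub_log ht₀
    have h₂ := log_sub_log_le_inv ht₀
    exact mul_le_mul (le_abs_self σ) (by linarith) (by linarith) (abs_nonneg σ)
  have hsq : c / t ^ 2 ≤ 2 * c * (t⁻¹ - (t + 1)⁻¹) := by
    rw [gap, ← div_eq_mul_inv, div_le_div_iff₀ (by positivity) (by positivity)]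
    nlinarith [mul_nonneg hc (mul_nonneg ht₀.le (sub_nonneg.2 ht))]
  rw [growthWeight, growthWeight, Real.rpow_def_of_pos ht₀, Real.rpow_def_of_pos (by linarith),
    ← Real.exp_add, ← Real.exp_add, ← Real.exp_add, Real.exp_le_exp]
  simp only [div_eq_mul_inv] at hsq ⊢
  linarith

theorem growthWeight_div_growthWeight_le {σ c s t : ℝ} (hc : 0 ≤ c) (hs : 1 ≤ s) (ht : 0 < t) :
    growthWeight σ c t / growthWeight σ c s ≤ Real.exp (|σ| + 2 * c) * (t / s) ^ σ := by
  have hs₀ : 0 < s := by linarith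
  have hκ : 0 ≤ |σ| + 2 * c := by positivity
  calc growthWeight σ c t / growthWeight σ c s
      = Real.exp ((|σ| + 2 * c) / s - (|σ| + 2 * c) / t) * (t / s) ^ σ := by
        rw [growthWeight, growthWeight, mul_div_mul_comm, ← Real.div_rpow ht.le hs₀.le,
          ← Real.exp_sub, mul_comm]
        ring_nf
    _ ≤ Real.exp (|σ| + 2 * c) * (t / s) ^ σ := by
        gcongr
        linarith [div_le_self hκ hs, div_nonneg hκ ht.le]

theorem le_mul_ratioSum_of_recursion {v : ℕ → ℝ} {B σ c : ℝ} (hB : 0 ≤ B) (hc : 0 ≤ c)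
    (h₀ : v 0 ≤ B)
    (hstep : ∀ k : ℕ, v (k + 1) ≤ Real.exp (σ / (k + 1) + c / (k + 1) ^ 2) * v k + B) (n : ℕ) :
    v n ≤ Real.exp (|σ| + 2 * c) * B * ratioSum σ (n + 1) := by
  set G : ℕ → ℝ := fun k ↦ growthWeight σ c (k + 1) with hG
  have hGpos (k : ℕ) : 0 < G k := growthWeight_pos σ c k.cast_add_one_pos
  have hGstep (k : ℕ) : Real.exp (σ / (k + 1) + c / (k + 1) ^ 2) * G k ≤ G (k + 1) := by
    simpa only [hG, Nat.cast_add_one] using exp_mul_growthWeight_le hc (by simp : (1 : ℝ) ≤ k + 1)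
  have solve : v n ≤ B * ∑ j ∈ Finset.range (n + 1), G n / G j := by
    induction n with
    | zero => simpa [(hGpos 0).ne'] using h₀
    | succ n ih =>
      calc v (n + 1)
          ≤ Real.exp (σ / (n + 1) + c / (n + 1) ^ 2) *
              (B * ∑ j ∈ Finset.range (n + 1), G n / G j) + B :=
            (hstep n).trans (by gcongr)
        _ = B * ∑ j ∈ Finset.range (n + 1),
              Real.exp (σ / (n + 1) + c / (n + 1) ^ 2) * G n / G j + B := by
            simp only [mul_div_assoc, ← Finset.mul_sum]
            ring
        _ ≤ B * ∑ j ∈ Finset.range (n + 1), G (n + 1) / G j + B := by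
            gcongr with j
            · exact (hGpos j).le
            · exact hGstep n
        _ = B * ∑ j ∈ Finset.range (n + 2), G (n + 1) / G j := by
            rw [Finset.sum_range_succ _ (n + 1), div_self (hGpos _).ne', mul_add, mul_one]
  calc v n ≤ B * ∑ j ∈ Finset.range (n + 1), G n / G j := solve
    _ ≤ B * ∑ j ∈ Finset.range (n + 1),
          Real.exp (|σ| + 2 * c) * (((n + 1 : ℕ) : ℝ) / (j + 1)) ^ σ := by
        gcongr with j
        rw [Nat.cast_add_one]
        exact growthWeight_div_growthWeight_le hc (by simp) n.cast_add_one_pos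
    _ = Real.exp (|σ| + 2 * c) * B * ratioSum σ (n + 1) := by
        rw [← Finset.mul_sum, ratioSum]
        ring

theorem min_mul_add_one_le (w b : ℝ) (k : ℕ) : min w b * (k + 1) ≤ w + k * b := by
  have := mul_le_mul_of_nonneg_left (min_le_right w b) k.cast_nonneg
  linarith [min_le_left w b]

theorem abs_inv_add_mul_sub_inv_le {b w : ℝ} (hb : 0 < b) (hw : 0 < w) (k : ℕ) :
    |(w + k * b)⁻¹ - (b * (k + 1))⁻¹| ≤ |b - w| / (b * min w b) / (k + 1) ^ 2 := by
  have hden : 0 < w + k * b := by positivity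
  have : 0 < min w b := lt_min hw hb
  calc |(w + k * b)⁻¹ - (b * (k + 1))⁻¹|
      = |b - w| * (w + k * b)⁻¹ * (b * (k + 1))⁻¹ := by
        rw [inv_sub_inv hden.ne' (by positivity), abs_div, div_eq_mul_inv,
          abs_of_pos (by positivity : 0 < (w + k * b) * (b * (k + 1))), mul_inv, mul_assoc]
        ring_nf
    _ ≤ |b - w| * (min w b * (k + 1))⁻¹ * (b * (k + 1))⁻¹ := by
        gcongr
        exact min_mul_add_one_le w b k
    _ = |b - w| / (b * min w b) / (k + 1) ^ 2 := by field_simp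

theorem exists_exponent_le {b w M Q : ℝ} (hb : 0 < b) (hw : 0 < w) (hM : 0 ≤ M) (hQ : 0 ≤ Q) :
    ∃ c, 0 ≤ c ∧ ∀ σ, |σ| ≤ M → ∀ k : ℕ,
      2 * σ * (w + k * b)⁻¹ + Q * (w + k * b)⁻¹ ^ 2 ≤ 2 * σ / b / (k + 1) + c / (k + 1) ^ 2 := by
  have : 0 < min w b := lt_min hw hb
  refine ⟨2 * M * (|b - w| / (b * min w b)) + Q / min w b ^ 2, by positivity, fun σ hσ k ↦ ?_⟩
  have linear_term : σ * ((w + k * b)⁻¹ - (b * (k + 1))⁻¹) ≤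
      M * (|b - w| / (b * min w b) / (k + 1) ^ 2) :=
    (le_abs_self _).trans ((abs_mul _ _).trans_le
      (mul_le_mul hσ (abs_inv_add_mul_sub_inv_le hb hw k) (abs_nonneg _) hM))
  have square_term : Q * (w + k * b)⁻¹ ^ 2 ≤ Q / min w b ^ 2 / (k + 1) ^ 2 := calc
    Q * (w + k * b)⁻¹ ^ 2 ≤ Q * (min w b * (k + 1))⁻¹ ^ 2 := by
      gcongr
      exact min_mul_add_one_le w b k
    _ = Q / min w b ^ 2 / (k + 1) ^ 2 := by field_simp
  have leading_term : 2 * σ / b / (k + 1) = 2 * σ * (b * (k + 1))⁻¹ := by field_simp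
  rw [leading_term, add_div, mul_assoc 2 M, mul_div_assoc, mul_div_assoc]
  linarith

end Recursion

section LinearRecursion

variable {Ω E : Type*} {m0 : MeasurableSpace Ω} {μ : Measure Ω} [NormedAddCommGroup E]
  {Y : ℕ → Ω → E}

theorem memLp_of_memLp_zero_of_sub {p : ENNReal} (h₀ : MemLp (Y 0) p μ)
    (hΔ : ∀ n, MemLp (Y (n + 1) - Y n) p μ) (n : ℕ) : MemLp (Y n) p μ := by
  induction n with
  | zero => exact h₀
  | succ n ih => simpa using (hΔ n).add ih

theorem memLp_and_lpNorm_le_toReal_iSup {p : ENNReal} {D : ℕ → Ω → E}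
    (hD : ∀ n, AEStronglyMeasurable (D n) μ) (hmom : ⨆ n, eLpNorm (D n) p μ < ⊤) (n : ℕ) :
    MemLp (D n) p μ ∧ lpNorm (D n) p μ ≤ (⨆ n, eLpNorm (D n) p μ).toReal := by
  have hle : eLpNorm (D n) p μ ≤ ⨆ n, eLpNorm (D n) p μ := le_iSup (fun n ↦ eLpNorm (D n) p μ) n
  refine ⟨⟨hD n, hle.trans_lt hmom⟩, ?_⟩
  rw [← toReal_eLpNorm (hD n)]
  exact ENNReal.toReal_mono hmom.ne hle

variable [NormedSpace ℂ E] [CompleteSpace E] [InnerProductSpaceable E] [IsFiniteMeasure μ]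
  {ℱ : Filtration ℕ m0} {p : ℝ}

theorem lpNorm_sq_le_ratioSum (hp : 2 ≤ p) (hY : StronglyAdapted ℱ Y)
    (h₀ : MemLp (Y 0) (ENNReal.ofReal p) μ)
    (hΔ : ∀ n, MemLp (Y (n + 1) - Y n) (ENNReal.ofReal p) μ) {B : ℝ}
    (hB₀ : lpNorm (Y 0) (ENNReal.ofReal p) μ ≤ B)
    (hB : ∀ n, lpNorm (Y (n + 1) - Y n) (ENNReal.ofReal p) μ ≤ B)
    {β : ℕ → ℝ} (hβ : ∀ n, 0 ≤ β n) {lam : ℂ} {N : E →L[ℂ] E} {ν : ℕ} (hN : N ^ (ν + 1) = 0)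
    (hdrift : ∀ n, μ[Y (n + 1) - Y n | ℱ n] =ᵐ[μ] fun ω ↦ β n • (lam • Y n ω + N (Y n ω)))
    {L s c : ℝ} (hL : 1 ≤ L) (hc : 0 ≤ c)
    (hexp : ∀ k : ℕ, 2 * (lam.re + L⁻¹) * β k + ‖lam‖ ^ 2 * β k ^ 2 ≤
      s / (k + 1) + c / (k + 1) ^ 2) (n : ℕ) :
    lpNorm (Y n) (ENNReal.ofReal p) μ ^ 2 ≤
      Real.exp (|s| + 2 * c) * ((8 * twoPointConst p + 1) *
        ((L ^ ν) ^ 2 * (∑ i ∈ Finset.range (ν + 1), ‖N ^ i‖ ^ 2) * B ^ 2)) *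
        ratioSum s (n + 1) := by
  have hmem := memLp_of_memLp_zero_of_sub h₀ hΔ
  have hK := twoPointConst_nonneg (p := p) (by linarith)
  set K := 8 * twoPointConst p
  set D := (L ^ ν) ^ 2 * (∑ i ∈ Finset.range (ν + 1), ‖N ^ i‖ ^ 2) * B ^ 2
  have hD : 0 ≤ D := by positivity
  have hKD : 0 ≤ K * D := by positivity
  have initial : chainEnergy N ν L (Y 0) (ENNReal.ofReal p) μ ≤ (K + 1) * D :=
    (chainEnergy_le hL h₀ hB₀).trans (by linarith)
  have step (k : ℕ) : chainEnergy N ν L (Y (k + 1)) (ENNReal.ofReal p) μ ≤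
      Real.exp (s / (k + 1) + c / (k + 1) ^ 2) *
        chainEnergy N ν L (Y k) (ENNReal.ofReal p) μ + (K + 1) * D := by
    refine (chainEnergy_le_mul_chainEnergy_add (ℱ.le k) hp (hβ k) hN (by positivity)
      (hY k) (hmem k) (hmem (k + 1)) (hdrift k)).trans (add_le_add ?_ ?_)
    · exact mul_le_mul_of_nonneg_right (Real.exp_le_exp.2 (hexp k))
        (chainEnergy_nonneg N ν L _ _)
    · exact (mul_le_mul_of_nonneg_left (chainEnergy_le hL (hΔ k) (hB k)) (by positivity)).trans
        (by linarith)
  exact (lpNorm_sq_le_chainEnergy N ν L (Y n) _).trans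
    (le_mul_ratioSum_of_recursion (v := fun k ↦ chainEnergy N ν L (Y k) (ENNReal.ofReal p) μ)
      (by positivity) hc initial step n)

theorem exists_lpNorm_sq_le_ratioSum (hp : 2 ≤ p) (hY : StronglyAdapted ℱ Y)
    (h₀ : MemLp (Y 0) (ENNReal.ofReal p) μ)
    (hΔ : ∀ n, MemLp (Y (n + 1) - Y n) (ENNReal.ofReal p) μ) {B : ℝ}
    (hB₀ : lpNorm (Y 0) (ENNReal.ofReal p) μ ≤ B)
    (hB : ∀ n, lpNorm (Y (n + 1) - Y n) (ENNReal.ofReal p) μ ≤ B)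
    {b w : ℝ} (hb : 0 < b) (hw : 0 < w) {lam : ℂ} {N : E →L[ℂ] E} {ν : ℕ} (hN : N ^ (ν + 1) = 0)
    (hdrift : ∀ n : ℕ, μ[Y (n + 1) - Y n | ℱ n] =ᵐ[μ]
      fun ω ↦ (w + n * b)⁻¹ • (lam • Y n ω + N (Y n ω))) :
    ∃ C, 0 ≤ C ∧ ∀ L, 1 ≤ L → ∀ n, lpNorm (Y n) (ENNReal.ofReal p) μ ^ 2 ≤
      C * (L ^ ν) ^ 2 * ratioSum (2 * (lam.re + L⁻¹) / b) (n + 1) := by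
  have hK := twoPointConst_nonneg (p := p) (by linarith)
  obtain ⟨c, hc, hexp⟩ := exists_exponent_le hb hw
    (by positivity : 0 ≤ ‖lam‖ + 1) (sq_nonneg ‖lam‖)
  set S := ∑ i ∈ Finset.range (ν + 1), ‖N ^ i‖ ^ 2
  refine ⟨Real.exp (2 * (‖lam‖ + 1) / b + 2 * c) * ((8 * twoPointConst p + 1) * (S * B ^ 2)),
    by positivity, fun L hL n ↦ ?_⟩
  have hσ : |lam.re + L⁻¹| ≤ ‖lam‖ + 1 := by
    refine (abs_add_le _ _).trans (add_le_add (Complex.abs_re_le_norm lam) ?_)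
    rw [abs_of_pos (by positivity)]
    exact inv_le_one_of_one_le₀ hL
  have hσb : |2 * (lam.re + L⁻¹) / b| ≤ 2 * (‖lam‖ + 1) / b := by
    rw [abs_div, abs_mul, abs_two, abs_of_pos hb]
    gcongr
  calc lpNorm (Y n) (ENNReal.ofReal p) μ ^ 2
      ≤ Real.exp (|2 * (lam.re + L⁻¹) / b| + 2 * c) * ((8 * twoPointConst p + 1) *
          ((L ^ ν) ^ 2 * S * B ^ 2)) * ratioSum (2 * (lam.re + L⁻¹) / b) (n + 1) :=
        lpNorm_sq_le_ratioSum hp hY h₀ hΔ hB₀ hB (fun k ↦ by positivity) hN hdrift hL hc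
          (hexp _ hσ) n
    _ ≤ Real.exp (2 * (‖lam‖ + 1) / b + 2 * c) * ((8 * twoPointConst p + 1) *
          ((L ^ ν) ^ 2 * S * B ^ 2)) * ratioSum (2 * (lam.re + L⁻¹) / b) (n + 1) := by
        gcongr
        exact ratioSum_nonneg _ _
    _ = _ := by ring

end LinearRecursion

section Rates

theorem ratioSum_mono {s t : ℝ} (hst : s ≤ t) (m : ℕ) : ratioSum s m ≤ ratioSum t m := by
  refine Finset.sum_le_sum fun k hk ↦ Real.rpow_le_rpow_of_exponent_le ?_ hst
  rw [one_le_div k.cast_add_one_pos]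
  exact_mod_cast Finset.mem_range.1 hk

theorem ratioSum_add_le {s δ : ℝ} (hδ : 0 ≤ δ) (m : ℕ) :
    ratioSum (s + δ) m ≤ (m : ℝ) ^ δ * ratioSum s m := by
  rw [ratioSum, ratioSum, Finset.mul_sum]
  refine Finset.sum_le_sum fun k hk ↦ ?_
  have hm : (0 : ℝ) < m := by exact_mod_cast (Finset.mem_range.1 hk).pos
  rw [Real.rpow_add (by positivity), mul_comm]
  gcongr
  exact div_le_self hm.le (by simp)

theorem ratioSum_eq_rpow_mul_sum (s : ℝ) (m : ℕ) :
    ratioSum s m = (m : ℝ) ^ s * ∑ k ∈ Finset.range m, ((k : ℝ) + 1) ^ (-s) := by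
  rw [ratioSum, Finset.mul_sum]
  refine Finset.sum_congr rfl fun k _ ↦ ?_
  rw [Real.div_rpow m.cast_nonneg (by positivity), Real.rpow_neg (by positivity), div_eq_mul_inv]

theorem rpow_one_sub_add_mul_rpow_neg_le {s x : ℝ} (hs₀ : 0 ≤ s) (hs₁ : s ≤ 1) (hx : 0 ≤ x) :
    x ^ (1 - s) + (1 - s) * (x + 1) ^ (-s) ≤ (x + 1) ^ (1 - s) := by
  have hx₁ : 0 < x + 1 := by linarith
  have bernoulli : (1 + -(x + 1)⁻¹) ^ (1 - s) ≤ 1 + (1 - s) * -(x + 1)⁻¹ :=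
    rpow_one_add_le_one_add_mul_self (neg_le_neg (inv_le_one_of_one_le₀ (by linarith)))
      (by linarith) (by linarith)
  have hfactor : x = (x + 1) * (1 + -(x + 1)⁻¹) := by field_simp; ring
  have hnonneg : 0 ≤ 1 + -(x + 1)⁻¹ :=
    (div_nonneg hx hx₁.le).trans_eq (by field_simp; ring)
  have hneg : (x + 1) ^ (-s) = (x + 1) ^ (1 - s) * (x + 1)⁻¹ := by
    rw [← Real.rpow_neg_one, ← Real.rpow_add hx₁]
    ring_nf
  calc x ^ (1 - s) + (1 - s) * (x + 1) ^ (-s)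
      = (x + 1) ^ (1 - s) * (1 + -(x + 1)⁻¹) ^ (1 - s) + (1 - s) * (x + 1) ^ (-s) := by
        rw [← Real.mul_rpow hx₁.le hnonneg, ← hfactor]
    _ ≤ (x + 1) ^ (1 - s) * (1 + (1 - s) * -(x + 1)⁻¹) + (1 - s) * (x + 1) ^ (-s) := by gcongr
    _ = (x + 1) ^ (1 - s) := by
        rw [hneg]
        ring

theorem sum_rpow_neg_le {s : ℝ} (hs₀ : 0 ≤ s) (hs₁ : s < 1) (m : ℕ) :
    ∑ k ∈ Finset.range m, ((k : ℝ) + 1) ^ (-s) ≤ (m : ℝ) ^ (1 - s) / (1 - s) := by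
  have hs : 0 < 1 - s := sub_pos.2 hs₁
  rw [le_div_iff₀' hs]
  induction m with
  | zero => simp [Real.zero_rpow hs.ne']
  | succ m ih =>
    rw [Finset.sum_range_succ, Nat.cast_add_one]
    linarith [rpow_one_sub_add_mul_rpow_neg_le hs₀ hs₁.le m.cast_nonneg]

theorem exists_ratioSum_le_of_lt_one {s : ℝ} (hs : s < 1) :
    ∃ C, 0 ≤ C ∧ ∀ m : ℕ, ratioSum s m ≤ C * m := by
  have ht : max s 0 < 1 := max_lt hs zero_lt_one
  refine ⟨(1 - max s 0)⁻¹, inv_nonneg.2 (by linarith), fun m ↦ ?_⟩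
  calc ratioSum s m ≤ ratioSum (max s 0) m := ratioSum_mono (le_max_left s 0) m
    _ ≤ (m : ℝ) ^ max s 0 * ((m : ℝ) ^ (1 - max s 0) / (1 - max s 0)) := by
        rw [ratioSum_eq_rpow_mul_sum]
        gcongr
        exact sum_rpow_neg_le (le_max_right s 0) ht m
    _ = (1 - max s 0)⁻¹ * m := by
        rw [mul_div_assoc', ← Real.rpow_add' m.cast_nonneg (by simp), add_sub_cancel, Real.rpow_one,
          div_eq_inv_mul]

theorem ratioSum_one_le (m : ℕ) : ratioSum 1 m ≤ m * (1 + Real.log m) := by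
  have h := harmonic_le_one_add_log m
  rw [harmonic, Rat.cast_sum] at h
  rw [ratioSum_eq_rpow_mul_sum, Real.rpow_one]
  gcongr
  simpa [Real.rpow_neg_one] using h

theorem exists_ratioSum_le_of_one_lt {s : ℝ} (hs : 1 < s) :
    ∃ C, 0 ≤ C ∧ ∀ m : ℕ, ratioSum s m ≤ C * (m : ℝ) ^ s := by
  have hsum : Summable fun k : ℕ ↦ ((k : ℝ) + 1) ^ (-s) := by
    simpa using (summable_nat_add_iff 1).2 (Real.summable_nat_rpow.2 (neg_lt_neg hs))
  refine ⟨∑' k : ℕ, ((k : ℝ) + 1) ^ (-s), tsum_nonneg fun k ↦ by positivity, fun m ↦ ?_⟩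
  rw [ratioSum_eq_rpow_mul_sum, mul_comm]
  gcongr
  exact hsum.sum_le_tsum _ fun k _ ↦ by positivity

/-- The growth rate in time `n` of the `L^p` norm of a spectral component whose eigenvalue has real
part `ρ` relative to the balance of the urn and nilpotency index `ν`. -/
noncomputable def spectralRate (ρ : ℝ) (ν n : ℕ) : ℝ :=
  if ρ < 1 / 2 then (n : ℝ) ^ (1 / 2 : ℝ)
  else if ρ = 1 / 2 then (n : ℝ) ^ (1 / 2 : ℝ) * Real.log n ^ ((ν : ℝ) + 1 / 2)
  else (n : ℝ) ^ ρ * Real.log n ^ ν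

theorem spectralRate_nonneg (ρ : ℝ) (ν n : ℕ) : 0 ≤ spectralRate ρ ν n := by
  have := Real.log_natCast_nonneg n
  rw [spectralRate]
  split_ifs <;> positivity

theorem spectralRate_of_lt {ρ : ℝ} (hρ : ρ < 1 / 2) (ν n : ℕ) :
    spectralRate ρ ν n = (n : ℝ) ^ (1 / 2 : ℝ) :=
  if_pos hρ

theorem spectralRate_half (ν n : ℕ) :
    spectralRate (1 / 2) ν n = (n : ℝ) ^ (1 / 2 : ℝ) * Real.log n ^ ((ν : ℝ) + 1 / 2) := by
  rw [spectralRate, if_neg (lt_irrefl _), if_pos rfl]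

theorem spectralRate_of_gt {ρ : ℝ} (hρ : 1 / 2 < ρ) (ν n : ℕ) :
    spectralRate ρ ν n = (n : ℝ) ^ ρ * Real.log n ^ ν := by
  rw [spectralRate, if_neg hρ.not_gt, if_neg hρ.ne']

theorem spectralRate_sq_of_lt {ρ : ℝ} (hρ : ρ < 1 / 2) (ν n : ℕ) : spectralRate ρ ν n ^ 2 = n := by
  rw [spectralRate_of_lt hρ, ← Real.sqrt_eq_rpow, Real.sq_sqrt n.cast_nonneg]

theorem spectralRate_half_sq (ν n : ℕ) :
    spectralRate (1 / 2) ν n ^ 2 = n * (Real.log n ^ ν) ^ 2 * Real.log n := by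
  have hlog := Real.log_natCast_nonneg n
  rw [spectralRate_half, Real.rpow_add' hlog (by positivity), Real.rpow_natCast,
    ← Real.sqrt_eq_rpow, ← Real.sqrt_eq_rpow, mul_pow, mul_pow, Real.sq_sqrt n.cast_nonneg,
    Real.sq_sqrt hlog, mul_assoc]

theorem spectralRate_sq_of_gt {ρ : ℝ} (hρ : 1 / 2 < ρ) (ν n : ℕ) :
    spectralRate ρ ν n ^ 2 = (n : ℝ) ^ (2 * ρ) * (Real.log n ^ ν) ^ 2 := by
  rw [spectralRate_of_gt hρ, mul_pow, mul_comm 2 ρ, ← Real.rpow_mul_natCast n.cast_nonneg,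
    Nat.cast_two]

theorem one_le_log_div_log_two {n : ℕ} (hn : 2 ≤ n) : 1 ≤ Real.log n / Real.log 2 := by
  rw [one_le_div (Real.log_pos one_lt_two)]
  exact Real.log_le_log two_pos (by exact_mod_cast hn)

theorem log_add_one_le_two_mul_log {n : ℕ} (hn : 2 ≤ n) : Real.log (n + 1) ≤ 2 * Real.log n := by
  have hn' : (2 : ℝ) ≤ n := by exact_mod_cast hn
  calc Real.log (n + 1) ≤ Real.log ((n : ℝ) ^ 2) := Real.log_le_log (by positivity) (by nlinarith)
    _ = 2 * Real.log n := by rw [Real.log_pow, Nat.cast_two]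

-- `L = log n / log 2` keeps `(n + 1) ^ (δ / L)` bounded while costing only a factor `log n ^ ν`.
theorem add_one_rpow_div_log_le {δ : ℝ} (hδ : 0 ≤ δ) {n : ℕ} (hn : 2 ≤ n) :
    ((n + 1 : ℕ) : ℝ) ^ (δ * (Real.log n / Real.log 2)⁻¹) ≤ Real.exp (2 * δ * Real.log 2) := by
  have hlog : 0 < Real.log n := Real.log_pos (by exact_mod_cast hn)
  have : 0 < Real.log 2 := Real.log_pos one_lt_two
  rw [Real.rpow_def_of_pos (by positivity), Real.exp_le_exp, Nat.cast_add_one]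
  calc Real.log (n + 1) * (δ * (Real.log n / Real.log 2)⁻¹)
      ≤ 2 * Real.log n * (δ * (Real.log n / Real.log 2)⁻¹) := by
        gcongr
        exact log_add_one_le_two_mul_log hn
    _ = 2 * δ * Real.log 2 := by field_simp

variable {f : ℕ → ℝ} {b r C : ℝ} {ν : ℕ}

theorem sq_le_log_pow_mul_ratioSum (hb : 0 < b) (hC : 0 ≤ C)
    (h : ∀ L, 1 ≤ L → ∀ n, f n ^ 2 ≤ C * (L ^ ν) ^ 2 * ratioSum (2 * (r + L⁻¹) / b) (n + 1))
    {n : ℕ} (hn : 2 ≤ n) :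
    f n ^ 2 ≤ C * Real.exp (4 / b * Real.log 2) / (Real.log 2 ^ ν) ^ 2 *
      ((Real.log n ^ ν) ^ 2 * ratioSum (2 * (r / b)) (n + 1)) := by
  set L := Real.log n / Real.log 2 with hL
  have hL₁ : 1 ≤ L := one_le_log_div_log_two hn
  calc f n ^ 2 ≤ C * (L ^ ν) ^ 2 * ratioSum (2 * (r / b) + 2 / b * L⁻¹) (n + 1) := by
        convert h L hL₁ n using 3
        ring
    _ ≤ C * (L ^ ν) ^ 2 * (Real.exp (2 * (2 / b) * Real.log 2) *
          ratioSum (2 * (r / b)) (n + 1)) := by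
        gcongr
        refine (ratioSum_add_le (by positivity) _).trans ?_
        exact mul_le_mul_of_nonneg_right (add_one_rpow_div_log_le (by positivity) hn)
          (ratioSum_nonneg _ _)
    _ = _ := by
        rw [hL, div_pow, div_pow]
        ring_nf

theorem exists_sq_le_mul_natCast (hb : 0 < b) (hr : r < b / 2) (hC : 0 ≤ C)
    (h : ∀ L, 1 ≤ L → ∀ n, f n ^ 2 ≤ C * (L ^ ν) ^ 2 * ratioSum (2 * (r + L⁻¹) / b) (n + 1)) :
    ∃ K, 0 ≤ K ∧ ∀ n : ℕ, 2 ≤ n → f n ^ 2 ≤ K * n := by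
  set L := max 1 (4 / (b - 2 * r))
  have hgap : 0 < b - 2 * r := by linarith
  have hL₁ : 1 ≤ L := le_max_left _ _
  have hinv : L⁻¹ ≤ (b - 2 * r) / 4 := by
    rw [← inv_div]
    exact inv_anti₀ (by positivity) (le_max_right _ _)
  have hs : 2 * (r + L⁻¹) / b < 1 := by
    rw [div_lt_one hb]
    linarith
  obtain ⟨K, hK, hsum⟩ := exists_ratioSum_le_of_lt_one hs
  refine ⟨C * (L ^ ν) ^ 2 * (K * 2), by positivity, fun n hn ↦ ?_⟩
  calc f n ^ 2 ≤ C * (L ^ ν) ^ 2 * (K * (n + 1 : ℕ)) := (h L hL₁ n).trans (by gcongr; exact hsum _)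
    _ ≤ C * (L ^ ν) ^ 2 * (K * (2 * n)) := by
        gcongr
        exact_mod_cast (by lia : n + 1 ≤ 2 * n)
    _ = C * (L ^ ν) ^ 2 * (K * 2) * n := by ring

theorem exists_sq_le_mul_natCast_mul_log_pow (hb : 0 < b) (hr : r = b / 2) (hC : 0 ≤ C)
    (h : ∀ L, 1 ≤ L → ∀ n, f n ^ 2 ≤ C * (L ^ ν) ^ 2 * ratioSum (2 * (r + L⁻¹) / b) (n + 1)) :
    ∃ K, 0 ≤ K ∧ ∀ n : ℕ, 2 ≤ n → f n ^ 2 ≤ K * (n * (Real.log n ^ ν) ^ 2 * Real.log n) := by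
  have : 0 < Real.log 2 := Real.log_pos one_lt_two
  have hs : 2 * (r / b) = 1 := by
    rw [hr]
    field_simp
  have hsum {n : ℕ} (hn : 2 ≤ n) :
      ratioSum 1 (n + 1) ≤ 2 * n * (((Real.log 2)⁻¹ + 2) * Real.log n) := by
    have h₁ := one_le_log_div_log_two hn
    have h₂ := log_add_one_le_two_mul_log hn
    have h₃ : ((n + 1 : ℕ) : ℝ) ≤ 2 * n := by exact_mod_cast (by lia : n + 1 ≤ 2 * n)
    have : (0 : ℝ) ≤ Real.log (n + 1) := Real.log_nonneg (by simp)
    refine (ratioSum_one_le _).trans (mul_le_mul h₃ ?_ (by positivity) (by positivity))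
    rw [Nat.cast_add_one, add_mul, inv_mul_eq_div]
    exact add_le_add h₁ h₂
  refine ⟨C * Real.exp (4 / b * Real.log 2) / (Real.log 2 ^ ν) ^ 2 * (2 * ((Real.log 2)⁻¹ + 2)),
    by positivity, fun n hn ↦ (sq_le_log_pow_mul_ratioSum hb hC h hn).trans ?_⟩
  rw [hs, mul_assoc _ (2 * _)]
  refine mul_le_mul_of_nonneg_left ?_ (by positivity)
  exact (mul_le_mul_of_nonneg_left (hsum hn) (sq_nonneg _)).trans_eq (by ring)

theorem exists_sq_le_mul_rpow_mul_log_pow (hb : 0 < b) (hr : b / 2 < r) (hC : 0 ≤ C)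
    (h : ∀ L, 1 ≤ L → ∀ n, f n ^ 2 ≤ C * (L ^ ν) ^ 2 * ratioSum (2 * (r + L⁻¹) / b) (n + 1)) :
    ∃ K, 0 ≤ K ∧ ∀ n : ℕ, 2 ≤ n →
      f n ^ 2 ≤ K * ((n : ℝ) ^ (2 * (r / b)) * (Real.log n ^ ν) ^ 2) := by
  have hs : 1 < 2 * (r / b) := by
    rw [mul_div_assoc', lt_div_iff₀ hb]
    linarith
  obtain ⟨S, hS, hsum⟩ := exists_ratioSum_le_of_one_lt hs
  refine ⟨C * Real.exp (4 / b * Real.log 2) / (Real.log 2 ^ ν) ^ 2 * (S * 2 ^ (2 * (r / b))),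
    by positivity, fun n hn ↦ (sq_le_log_pow_mul_ratioSum hb hC h hn).trans ?_⟩
  rw [mul_assoc _ (S * _)]
  refine mul_le_mul_of_nonneg_left ?_ (by positivity)
  calc (Real.log n ^ ν) ^ 2 * ratioSum (2 * (r / b)) (n + 1)
      ≤ (Real.log n ^ ν) ^ 2 * (S * (2 * n : ℝ) ^ (2 * (r / b))) := by
        gcongr
        refine (hsum _).trans ?_
        gcongr
        exact_mod_cast (by lia : n + 1 ≤ 2 * n)
    _ = S * 2 ^ (2 * (r / b)) * ((n : ℝ) ^ (2 * (r / b)) * (Real.log n ^ ν) ^ 2) := by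
        rw [Real.mul_rpow zero_le_two n.cast_nonneg]
        ring

theorem exists_le_mul_spectralRate (hb : 0 < b) (hC : 0 ≤ C)
    (h : ∀ L, 1 ≤ L → ∀ n, f n ^ 2 ≤ C * (L ^ ν) ^ 2 * ratioSum (2 * (r + L⁻¹) / b) (n + 1)) :
    ∃ K, ∀ n : ℕ, 2 ≤ n → f n ≤ K * spectralRate (r / b) ν n := by
  suffices ∃ K, 0 ≤ K ∧ ∀ n : ℕ, 2 ≤ n → f n ^ 2 ≤ K * spectralRate (r / b) ν n ^ 2 by
    obtain ⟨K, hK, hf⟩ := this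
    refine ⟨√K, fun n hn ↦ ?_⟩
    refine le_of_sq_le_sq ?_ (mul_nonneg (Real.sqrt_nonneg K) (spectralRate_nonneg _ _ _))
    rw [mul_pow, Real.sq_sqrt hK]
    exact hf n hn
  rcases lt_trichotomy r (b / 2) with hr | hr | hr
  · have hρ : r / b < 1 / 2 := by rwa [div_lt_iff₀ hb, one_div_mul_eq_div]
    simpa only [spectralRate_sq_of_lt hρ] using exists_sq_le_mul_natCast hb hr hC h
  · have hρ : r / b = 1 / 2 := by rw [hr, div_div_cancel_left' hb.ne', one_div]
    simpa only [hρ, spectralRate_half_sq] using exists_sq_le_mul_natCast_mul_log_pow hb hr hC h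
  · have hρ : 1 / 2 < r / b := by rwa [lt_div_iff₀ hb, one_div_mul_eq_div]
    simpa only [spectralRate_sq_of_gt hρ] using exists_sq_le_mul_rpow_mul_log_pow hb hr hC h

end Rates

section LinearDrift

variable {Ω E F : Type*} {m0 : MeasurableSpace Ω} {μ : Measure Ω} [IsProbabilityMeasure μ]
  [NormedAddCommGroup E] [NormedSpace ℂ E] [CompleteSpace E] [InnerProductSpaceable E]
  [NormedAddCommGroup F] [NormedSpace ℝ F] [CompleteSpace F]
  {ℱ : Filtration ℕ m0} {p : ℝ} {X : ℕ → Ω → F} {b w : ℝ}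

theorem exists_lpNorm_clm_comp_le_mul_spectralRate (hp : 2 ≤ p) (hX : StronglyAdapted ℱ X)
    (h₀ : MemLp (X 0) (ENNReal.ofReal p) μ)
    (hmom : ⨆ n, eLpNorm (X (n + 1) - X n) (ENNReal.ofReal p) μ < ⊤)
    (hb : 0 < b) (hw : 0 < w) {A : F → F}
    (hdrift : ∀ n : ℕ, μ[X (n + 1) - X n | ℱ n] =ᵐ[μ] fun ω ↦ (w + n * b)⁻¹ • A (X n ω))
    {R : F →L[ℝ] E} {lam : ℂ} {N : E →L[ℂ] E} (hR : ∀ x, R (A x) = lam • R x + N (R x)) {ν : ℕ}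
    (hN : N ^ (ν + 1) = 0) :
    ∃ K, ∀ n : ℕ, 2 ≤ n →
      lpNorm (fun ω ↦ R (X n ω)) (ENNReal.ofReal p) μ ≤ K * spectralRate (lam.re / b) ν n := by
  have hp₁ : 1 ≤ ENNReal.ofReal p := ENNReal.one_le_ofReal.2 (by linarith)
  have hXm (n : ℕ) : AEStronglyMeasurable (X n) μ := ((hX n).mono (ℱ.le n)).aestronglyMeasurable
  have hΔ := memLp_and_lpNorm_le_toReal_iSup (fun n ↦ (hXm (n + 1)).sub (hXm n)) hmom
  set B := (⨆ n, eLpNorm (X (n + 1) - X n) (ENNReal.ofReal p) μ).toReal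
  set B' := max (lpNorm (X 0) (ENNReal.ofReal p) μ) B
  have hsub (n : ℕ) : (fun ω ↦ R (X (n + 1) ω)) - (fun ω ↦ R (X n ω)) =
      fun ω ↦ R ((X (n + 1) - X n) ω) := by
    ext ω
    simp
  have hRB {f : Ω → F} (hf : MemLp f (ENNReal.ofReal p) μ)
      (hfB : lpNorm f (ENNReal.ofReal p) μ ≤ B') :
      lpNorm (fun ω ↦ R (f ω)) (ENNReal.ofReal p) μ ≤ ‖R‖ * B' :=
    (lpNorm_clm_comp_le R hf).trans (mul_le_mul_of_nonneg_left hfB (norm_nonneg R))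
  obtain ⟨C, hC, h⟩ := exists_lpNorm_sq_le_ratioSum (Y := fun n ω ↦ R (X n ω)) (B := ‖R‖ * B') hp
    (fun n ↦ R.continuous.comp_stronglyMeasurable (hX n)) (R.comp_memLp' h₀)
    (fun n ↦ hsub n ▸ R.comp_memLp' (hΔ n).1) (hRB h₀ (le_max_left _ _))
    (fun n ↦ hsub n ▸ hRB (hΔ n).1 ((hΔ n).2.trans (le_max_right _ _))) hb hw hN
    (fun n ↦ condExp_clm_comp_sub (T' := fun x ↦ lam • x + N x) hR
      ((hΔ n).1.integrable hp₁) (hdrift n))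
  exact exists_le_mul_spectralRate hb hC h

theorem exists_eLpNorm_clm_comp_sub_integral_le_mul_spectralRate (hp : 2 ≤ p)
    (hX : StronglyAdapted ℱ X) (h₀ : MemLp (X 0) (ENNReal.ofReal p) μ)
    (hmom : ⨆ n, eLpNorm (X (n + 1) - X n) (ENNReal.ofReal p) μ < ⊤)
    (hb : 0 < b) (hw : 0 < w) {A : F → F}
    (hdrift : ∀ n : ℕ, μ[X (n + 1) - X n | ℱ n] =ᵐ[μ] fun ω ↦ (w + n * b)⁻¹ • A (X n ω))
    {R : F →L[ℝ] E} {lam : ℂ} {N : E →L[ℂ] E} (hR : ∀ x, R (A x) = lam • R x + N (R x)) {ν : ℕ}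
    (hN : N ^ (ν + 1) = 0) :
    ∃ K, ∀ n : ℕ, 2 ≤ n →
      eLpNorm (fun ω ↦ R (X n ω - ∫ ω', X n ω' ∂μ)) (ENNReal.ofReal p) μ ≤
        ENNReal.ofReal (K * spectralRate (lam.re / b) ν n) := by
  obtain ⟨K, hK⟩ := exists_lpNorm_clm_comp_le_mul_spectralRate hp hX h₀ hmom hb hw hdrift hR hN
  have hXm (n : ℕ) : AEStronglyMeasurable (X n) μ := ((hX n).mono (ℱ.le n)).aestronglyMeasurable
  have hmem := memLp_of_memLp_zero_of_sub h₀ fun n ↦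
    (memLp_and_lpNorm_le_toReal_iSup (fun n ↦ (hXm (n + 1)).sub (hXm n)) hmom n).1
  refine ⟨2 * K, fun n hn ↦ ?_⟩
  refine (eLpNorm_clm_comp_sub_integral_le (ENNReal.one_le_ofReal.2 (by linarith)) (hmem n) R).trans
    (ENNReal.ofReal_le_ofReal ?_)
  linarith [hK n hn]

end LinearDrift

section SpectralProjection

variable {q : ℕ} {A B C P : Matrix (Fin q) (Fin q) ℂ} {lam : ℂ}

theorem matrix_eq_of_mulVec_eq_on_genEigenspace
    (h : ∀ mu : ℂ, ∀ v : Fin q → ℂ, ((A - mu • 1) ^ q).mulVec v = 0 → B.mulVec v = C.mulVec v) :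
    B = C := by
  refine Matrix.toLin'.injective (LinearMap.ext fun v ↦ ?_)
  have hle : ⨆ mu, Module.End.maxGenEigenspace A.toLin' mu ≤
      LinearMap.eqLocus B.toLin' C.toLin' := by
    refine iSup_le fun mu v hv ↦ ?_
    have hA : A.toLin' - mu • 1 = (A - mu • 1).toLin' := by
      simp [Module.End.one_eq_id]
    rw [Module.End.maxGenEigenspace_eq_genEigenspace_finrank, Module.finrank_fin_fun,
      Module.End.mem_genEigenspace_nat, hA, ← Matrix.toLin'_pow, LinearMap.mem_ker,
      Matrix.toLin'_apply] at hv
    exact h mu v hv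
  rw [Module.End.iSup_maxGenEigenspace_eq_top] at hle
  exact hle Submodule.mem_top

namespace IsSpectralProj

theorem isIdempotentElem (hP : IsSpectralProj A lam P) : P * P = P := by
  refine matrix_eq_of_mulVec_eq_on_genEigenspace (A := A) fun mu v hv ↦ ?_
  rw [← Matrix.mulVec_mulVec]
  by_cases h : mu = lam
  · subst h
    rw [hP.1 v hv, hP.1 v hv]
  · rw [hP.2 mu h v hv, Matrix.mulVec_zero]

theorem commute (hP : IsSpectralProj A lam P) : Commute P A := by
  refine matrix_eq_of_mulVec_eq_on_genEigenspace (A := A) fun mu v hv ↦ ?_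
  have hcomm : Commute ((A - mu • 1) ^ q) A :=
    ((Commute.refl A).sub_left ((Commute.one_left A).smul_left mu)).pow_left q
  have hAv : ((A - mu • 1) ^ q).mulVec (A.mulVec v) = 0 := by
    rw [Matrix.mulVec_mulVec, hcomm.eq, ← Matrix.mulVec_mulVec, hv, Matrix.mulVec_zero]
  rw [← Matrix.mulVec_mulVec, ← Matrix.mulVec_mulVec]
  by_cases h : mu = lam
  · subst h
    rw [hP.1 _ hAv, hP.1 v hv]
  · rw [hP.2 mu h _ hAv, hP.2 mu h v hv, Matrix.mulVec_zero]

theorem mulVec_mulVec (hP : IsSpectralProj A lam P) (v : Fin q → ℂ) :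
    P.mulVec (A.mulVec v) = lam • P.mulVec v + ((A - lam • 1) * P).mulVec (P.mulVec v) := by
  rw [Matrix.mulVec_mulVec, Matrix.mulVec_mulVec, mul_assoc, hP.isIdempotentElem, hP.commute.eq,
    sub_mul, smul_mul_assoc, one_mul, Matrix.sub_mulVec, Matrix.smul_mulVec, add_sub_cancel]

end IsSpectralProj

/-- The real-linear map `x ↦ P x` from `ℝ ^ q`, regarded as a subset of `ℂ ^ q`, to `ℂ ^ q`. -/
noncomputable def realMulVecCLM (P : Matrix (Fin q) (Fin q) ℂ) :
    EuclideanSpace ℝ (Fin q) →L[ℝ] EuclideanSpace ℂ (Fin q) :=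
  LinearMap.toContinuousLinearMap <|
    (WithLp.linearEquiv 2 ℝ (Fin q → ℂ)).symm ∘ₗ P.mulVecLin.restrictScalars ℝ ∘ₗ
      Complex.ofRealCLM.toLinearMap.compLeft (Fin q) ∘ₗ WithLp.linearEquiv 2 ℝ (Fin q → ℝ)

theorem realMulVecCLM_apply (P : Matrix (Fin q) (Fin q) ℂ) (x : EuclideanSpace ℝ (Fin q)) :
    realMulVecCLM P x = WithLp.toLp 2 (P.mulVec fun j ↦ (x j : ℂ)) :=
  rfl

theorem realMulVecCLM_toEuclideanCLM {A : Matrix (Fin q) (Fin q) ℝ}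
    (hP : IsSpectralProj (A.map (fun x : ℝ ↦ (x : ℂ))) lam P) (x : EuclideanSpace ℝ (Fin q)) :
    realMulVecCLM P (Matrix.toEuclideanCLM (𝕜 := ℝ) A x) = lam • realMulVecCLM P x +
      Matrix.toEuclideanCLM (𝕜 := ℂ) ((A.map (fun x : ℝ ↦ (x : ℂ)) - lam • 1) * P)
        (realMulVecCLM P x) := by
  have hcast : (fun j ↦ ((Matrix.toEuclideanCLM (𝕜 := ℝ) A x j : ℝ) : ℂ)) =
      (A.map (fun x : ℝ ↦ (x : ℂ))).mulVec fun j ↦ (x j : ℂ) := by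
    ext i
    simp [Matrix.ofLp_toEuclideanCLM, Matrix.mulVec, dotProduct]
  rw [realMulVecCLM_apply, hcast, hP.mulVec_mulVec, realMulVecCLM_apply, Matrix.toEuclideanCLM_toLp,
    WithLp.toLp_add, WithLp.toLp_smul]

end SpectralProjection

theorem urn_spectralProj_centered_Lp_bound_general {q : ℕ} {Ω : Type*} {m0 : MeasurableSpace Ω}
    {μ : Measure Ω} [IsProbabilityMeasure μ] {ℱ : Filtration ℕ m0} {b w p : ℝ} (hb : 0 < b)
    (hw : 0 < w) {A : Matrix (Fin q) (Fin q) ℝ} {X : ℕ → Ω → EuclideanSpace ℝ (Fin q)}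
    (hadp : Adapted ℱ X) (hX0 : MemLp (X 0) (ENNReal.ofReal p) μ)
    (hcond : ∀ n : ℕ, μ[fun ω ↦ X (n + 1) ω - X n ω | ℱ n] =ᵐ[μ]
      fun ω ↦ (w + n * b)⁻¹ • Matrix.toEuclideanCLM (𝕜 := ℝ) A (X n ω))
    (hp : 2 ≤ p)
    (hmom : ⨆ n : ℕ, eLpNorm (fun ω ↦ X (n + 1) ω - X n ω) (ENNReal.ofReal p) μ < ⊤)
    {lam : ℂ} {P : Matrix (Fin q) (Fin q) ℂ}
    (hP : IsSpectralProj (A.map (fun x : ℝ ↦ (x : ℂ))) lam P)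
    {ν : ℕ} (hν : NilIndexOf (A.map (fun x : ℝ ↦ (x : ℂ))) lam P ν) :
    ∃ C : ℝ, ∀ n : ℕ, 2 ≤ n →
      (lam.re < b / 2 →
        eLpNorm (fun ω ↦ (WithLp.equiv 2 (Fin q → ℂ)).symm
            (P.mulVec (fun j ↦ ((X n ω j - (∫ ω', X n ω' ∂μ) j : ℝ) : ℂ))))
          (ENNReal.ofReal p) μ ≤ ENNReal.ofReal (C * (n : ℝ) ^ (1 / 2 : ℝ))) ∧
      (lam.re = b / 2 →
        eLpNorm (fun ω ↦ (WithLp.equiv 2 (Fin q → ℂ)).symm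
            (P.mulVec (fun j ↦ ((X n ω j - (∫ ω', X n ω' ∂μ) j : ℝ) : ℂ))))
          (ENNReal.ofReal p) μ
          ≤ ENNReal.ofReal (C * (n : ℝ) ^ (1 / 2 : ℝ) * Real.log n ^ ((ν : ℝ) + 1 / 2))) ∧
      (b / 2 < lam.re →
        eLpNorm (fun ω ↦ (WithLp.equiv 2 (Fin q → ℂ)).symm
            (P.mulVec (fun j ↦ ((X n ω j - (∫ ω', X n ω' ∂μ) j : ℝ) : ℂ))))
          (ENNReal.ofReal p) μ
          ≤ ENNReal.ofReal (C * (n : ℝ) ^ (lam.re / b) * Real.log n ^ ν)) := by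
  have hN : Matrix.toEuclideanCLM (𝕜 := ℂ) ((A.map (fun x : ℝ ↦ (x : ℂ)) - lam • 1) * P) ^ (ν + 1)
      = 0 := by rw [← map_pow, hν.1, map_zero]
  obtain ⟨C, hC⟩ := exists_eLpNorm_clm_comp_sub_integral_le_mul_spectralRate hp
    (fun n ↦ (hadp n).stronglyMeasurable) hX0 hmom hb hw hcond (realMulVecCLM_toEuclideanCLM hP) hN
  refine ⟨C, fun n hn ↦ ⟨fun h ↦ ?_, fun h ↦ ?_, fun h ↦ ?_⟩⟩
  · have hρ : lam.re / b < 1 / 2 := by rwa [div_lt_iff₀ hb, one_div_mul_eq_div]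
    exact (hC n hn).trans_eq (by rw [spectralRate_of_lt hρ])
  · have hρ : lam.re / b = 1 / 2 := by rw [h, div_div_cancel_left' hb.ne', one_div]
    exact (hC n hn).trans_eq (by rw [hρ, spectralRate_half, mul_assoc])
  · have hρ : 1 / 2 < lam.re / b := by rwa [lt_div_iff₀ hb, one_div_mul_eq_div]
    exact (hC n hn).trans_eq (by rw [spectralRate_of_gt hρ, mul_assoc])

/-- Under the Pólya urn hypotheses, let p ≥ 2 and assume
sup_n ‖X_{n+1} − X_n‖_p < ∞. Then for every eigenvalue λ of (the complexification of) A,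
with spectral projection P_λ and nilpotency index ν_λ, there is a constant C (depending
on the data and p but not on n) such that for every n ≥ 2:
‖P_λ(X_n − E X_n)‖_p ≤ C n^{1/2}                      if Re λ < b/2;
‖P_λ(X_n − E X_n)‖_p ≤ C n^{1/2} (log n)^{ν_λ + 1/2}  if Re λ = b/2;
‖P_λ(X_n − E X_n)‖_p ≤ C n^{Re λ / b} (log n)^{ν_λ}   if Re λ > b/2. -/
theorem urn_spectralProj_centered_Lp_bound
    (q : ℕ) (hq : 2 ≤ q) {Ω : Type} {m0 : MeasurableSpace Ω}
    (μ : Measure Ω) [IsProbabilityMeasure μ] (ℱ : Filtration ℕ m0)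
    (a : Fin q → ℝ) (b : ℝ) (hb : 0 < b)
    (A : Matrix (Fin q) (Fin q) ℝ) (hA : Matrix.vecMul a A = b • a)
    (X : ℕ → Ω → EuclideanSpace ℝ (Fin q)) (hadp : Adapted ℱ X)
    (hXint : ∀ n, Integrable (X n) μ)
    (x₀ : EuclideanSpace ℝ (Fin q)) (hX0 : X 0 = fun _ => x₀)
    (hw₀ : 0 < ∑ j, a j * x₀ j)
    (hwn : ∀ n : ℕ, ∀ᵐ ω ∂μ, ∑ j, a j * X n ω j = (∑ j, a j * x₀ j) + (n : ℝ) * b)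
    (hcond : ∀ n : ℕ, μ[fun ω => X (n + 1) ω - X n ω | ℱ n] =ᵐ[μ]
      fun ω => ((∑ j, a j * x₀ j) + (n : ℝ) * b)⁻¹ • (Matrix.toEuclideanCLM (𝕜 := ℝ) A (X n ω)))
    (p : ℝ) (hp : 2 ≤ p)
    (hmom : (⨆ n : ℕ, eLpNorm (fun ω => X (n + 1) ω - X n ω) (ENNReal.ofReal p) μ) < ⊤)
    (lam : ℂ) (hlam : lam ∈ spectrum ℂ (A.map (fun x : ℝ => (x : ℂ))))
    (P : Matrix (Fin q) (Fin q) ℂ)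
    (hP : IsSpectralProj (A.map (fun x : ℝ => (x : ℂ))) lam P)
    (ν : ℕ) (hν : NilIndexOf (A.map (fun x : ℝ => (x : ℂ))) lam P ν) :
    ∃ C : ℝ, ∀ n : ℕ, 2 ≤ n →
      (lam.re < b / 2 →
        eLpNorm (fun ω => (WithLp.equiv 2 (Fin q → ℂ)).symm
            (P.mulVec (fun j => ((X n ω j - (∫ ω', X n ω' ∂μ) j : ℝ) : ℂ))))
          (ENNReal.ofReal p) μ ≤ ENNReal.ofReal (C * (n : ℝ) ^ (1 / 2 : ℝ))) ∧
      (lam.re = b / 2 →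
        eLpNorm (fun ω => (WithLp.equiv 2 (Fin q → ℂ)).symm
            (P.mulVec (fun j => ((X n ω j - (∫ ω', X n ω' ∂μ) j : ℝ) : ℂ))))
          (ENNReal.ofReal p) μ
          ≤ ENNReal.ofReal (C * (n : ℝ) ^ (1 / 2 : ℝ) * Real.log n ^ ((ν : ℝ) + 1 / 2))) ∧
      (b / 2 < lam.re →
        eLpNorm (fun ω => (WithLp.equiv 2 (Fin q → ℂ)).symm
            (P.mulVec (fun j => ((X n ω j - (∫ ω', X n ω' ∂μ) j : ℝ) : ℂ))))
          (ENNReal.ofReal p) μ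
          ≤ ENNReal.ofReal (C * (n : ℝ) ^ (lam.re / b) * Real.log n ^ ν)) := by
  exact urn_spectralProj_centered_Lp_bound_general hb hw₀ hadp (hX0 ▸ memLp_const x₀) hcond hp hmom
    hP hν
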